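/- Let v1, v2, v3, v4 (listed counterclockwise) be the vertices of a convex quadrilateral Q = conv{v1, v2, v3, v4} in ℝ², let mij be the midpoint of vi and vj, and let c = (v1 + v2 + v3 + v4)/4. Then the four closed subquadrilaterals conv{v1, m12, c, m41}, conv{m12, v2, m23, c}, conv{c, m23, v3, m34}, conv{m41, c, m34, v4} of the red refinement of Q have pairwise disjoint interiors and their union equals Q; in particular the sum of their areas equals the area of Q. -/

import Mathlib

noncomputable section

open MeasureTheory

/-- The Euclidean plane. -/
abbrev E2 : Type := EuclideanSpace ℝ (Fin 2)

/-- The points `a`, `b`, `c` are in counterclockwise order (positively oriented). -/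
def Ccw (a b c : E2) : Prop :=
  0 < (b 0 - a 0) * (c 1 - a 1) - (b 1 - a 1) * (c 0 - a 0)

/-- The (listed) points `a, b, c, d` are the vertices of a convex quadrilateral: they are
in convex position, with no three of them collinear. -/
def ConvexQuad (a b c d : E2) : Prop :=
  (¬ Collinear ℝ ({a, b, c} : Set E2) ∧ ¬ Collinear ℝ ({a, b, d} : Set E2) ∧
    ¬ Collinear ℝ ({a, c, d} : Set E2) ∧ ¬ Collinear ℝ ({b, c, d} : Set E2)) ∧
  (a ∉ convexHull ℝ ({b, c, d} : Set E2) ∧ b ∉ convexHull ℝ ({a, c, d} : Set E2) ∧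
    c ∉ convexHull ℝ ({a, b, d} : Set E2) ∧ d ∉ convexHull ℝ ({a, b, c} : Set E2))

/-!
A convex quadrilateral `abcd` may be cut by any two segments `xz` and `yw` that join interior points
of opposite sides; the midpoints play no special role. A positively oriented quadrilateral is the
intersection of the closed half planes to the left of its sides. The piece at the corner `a` is
again such a quadrilateral: two of its half planes belong to the sides of `abcd` at `a` and two to
the cutting lines. So each piece is `abcd` intersected with a quadrant of the two lines, and the
quadrants cover the plane and overlap only on the lines, which are null sets.
-/

open Set

theorem insert_four_rotate {α : Type*} (a b c d : α) : ({b, c, d, a} : Set α) = {a, b, c, d} := by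
  ext p
  simp only [mem_insert_iff, mem_singleton_iff]
  tauto

theorem inter_quadrants_union {α : Type*} {A H H' K K' : Set α} (hH : H ∪ H' = univ)
    (hK : K ∪ K' = univ) :
    A ∩ (H ∩ K) ∪ A ∩ (K ∩ H') ∪ A ∩ (H' ∩ K') ∪ A ∩ (K' ∩ H) = A :=
  calc
    _ = A ∩ ((H ∪ H') ∩ (K ∪ K')) := by grind
    _ = A := by rw [hH, hK, univ_inter, inter_univ]

theorem inv_four_smul_add_eq_midpoint {𝕜 E : Type*} [Field 𝕜] [CharZero 𝕜] [AddCommGroup E]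
    [Module 𝕜 E] (a b c d : E) :
    (4 : 𝕜)⁻¹ • (a + b + c + d) = midpoint 𝕜 (midpoint 𝕜 a b) (midpoint 𝕜 c d) := by
  simp only [midpoint_eq_smul_add, invOf_eq_inv]
  module

section HalfSpaces

theorem affineMap_surjective_of_ne {𝕜 E : Type*} [Field 𝕜] [AddCommGroup E] [Module 𝕜 E]
    {f : E →ᵃ[𝕜] 𝕜} {p q : E} (h : f p ≠ f q) : Function.Surjective f := fun t =>
  ⟨AffineMap.lineMap p q ((t - f p) / (f q - f p)), by
    rw [f.apply_lineMap, AffineMap.lineMap_apply, vsub_eq_sub, smul_eq_mul, vadd_eq_add,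
      div_mul_cancel₀ _ (sub_ne_zero.2 h.symm), sub_add_cancel]⟩

variable {E : Type*} [NormedAddCommGroup E] [NormedSpace ℝ E] [FiniteDimensional ℝ E]
  {f g : E →ᵃ[ℝ] ℝ}

theorem disjoint_interior_of_subset_halfSpace (hf : Function.Surjective f) {t : ℝ} {A B : Set E}
    (hA : A ⊆ f ⁻¹' Ici t) (hB : B ⊆ f ⁻¹' Iic t) : Disjoint (interior A) (interior B) := by
  have hopen : IsOpenMap f := AffineMap.isOpenMap_linear_iff.1 <|
    f.linear.isOpenMap_of_finiteDimensional (f.linear_surjective_iff.2 hf)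
  have interior_eq (s : Set ℝ) : interior (f ⁻¹' s) = f ⁻¹' interior s :=
    (hopen.preimage_interior_eq_interior_preimage f.continuous_of_finiteDimensional s).symm
  have hdisj : Disjoint (interior (f ⁻¹' Ici t)) (interior (f ⁻¹' Iic t)) := by
    rw [interior_eq, interior_eq, interior_Ici, interior_Iic]
    exact (Ioi_disjoint_Iio_same (a := t)).preimage f
  exact hdisj.mono (interior_mono hA) (interior_mono hB)

variable [MeasurableSpace E] [BorelSpace E] (μ : Measure E) [μ.IsAddHaarMeasure]

theorem addHaar_affineMap_fiber (hf : Function.Surjective f) (t : ℝ) : μ (f ⁻¹' {t}) = 0 := by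
  have hne : (affineSpan ℝ {t}).comap f ≠ ⊤ := by
    obtain ⟨p, hp⟩ := hf (t + 1)
    intro htop
    have hmem : p ∈ (affineSpan ℝ {t}).comap f := htop ▸ AffineSubspace.mem_top ℝ E p
    simp [AffineSubspace.mem_comap, AffineSubspace.mem_affineSpan_singleton, hp] at hmem
  simpa only [AffineSubspace.coe_comap, AffineSubspace.coe_affineSpan_singleton] using
    Measure.addHaar_affineSubspace μ _ hne

theorem measure_inter_halfSpaces (hf : Function.Surjective f) (t : ℝ) (A : Set E) :
    μ (A ∩ f ⁻¹' Ici t) + μ (A ∩ f ⁻¹' Iic t) = μ A := by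
  have hmeas : MeasurableSet (f ⁻¹' Ici t) :=
    f.continuous_of_finiteDimensional.measurable measurableSet_Ici
  have hle : (f ⁻¹' Iic t : Set E) =ᵐ[μ] (f ⁻¹' Iio t : Set E) := by
    filter_upwards [measure_eq_zero_iff_ae_notMem.1 (addHaar_affineMap_fiber μ hf t)] with p hp
    exact propext ⟨fun h => lt_of_le_of_ne h hp, fun h : f p < t => h.le⟩
  rw [measure_congr ((ae_eq_refl A).inter hle), ← compl_Ici, preimage_compl, ← Set.sdiff_eq,
    measure_inter_add_sdiff A hmeas]

theorem measure_inter_quadrants (hf : Function.Surjective f) (hg : Function.Surjective g)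
    (s t : ℝ) (A : Set E) :
    μ (A ∩ (f ⁻¹' Ici s ∩ g ⁻¹' Ici t)) + μ (A ∩ (g ⁻¹' Ici t ∩ f ⁻¹' Iic s)) +
      μ (A ∩ (f ⁻¹' Iic s ∩ g ⁻¹' Iic t)) + μ (A ∩ (g ⁻¹' Iic t ∩ f ⁻¹' Ici s)) = μ A := by
  rw [inter_comm (g ⁻¹' Ici t), inter_comm (g ⁻¹' Iic t)]
  simp only [← inter_assoc]
  rw [← measure_inter_halfSpaces μ hf s A, ← measure_inter_halfSpaces μ hg t (A ∩ f ⁻¹' Ici s),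
    ← measure_inter_halfSpaces μ hg t (A ∩ f ⁻¹' Iic s)]
  abel

end HalfSpaces

section Orientation

/-- The orientation function of the directed line `ab`: twice the signed area of the triangle `abp`,
as an affine function of `p`. Thus `Ccw a b p` is by definition `0 < orient a b p`. -/
def orient (a b : E2) : E2 →ᵃ[ℝ] ℝ :=
  AffineMap.mk' (fun p => (b 0 - a 0) * (p 1 - a 1) - (b 1 - a 1) * (p 0 - a 0))
    ((b 0 - a 0) • EuclideanSpace.projₗ 1 - (b 1 - a 1) • EuclideanSpace.projₗ 0) a
    (fun p => by simp)

/-- The closed half plane to the left of the directed line `ab` (the whole plane if `a = b`). -/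
def leftHalfPlane (a b : E2) : Set E2 := orient a b ⁻¹' Ici 0

variable {a b c d p x z : E2}

theorem orient_apply (a b p : E2) :
    orient a b p = (b 0 - a 0) * (p 1 - a 1) - (b 1 - a 1) * (p 0 - a 0) := rfl

theorem orient_swap (a b : E2) : orient b a = -orient a b := by
  ext p
  simp only [AffineMap.coe_neg, Pi.neg_apply, orient_apply]
  ring

theorem orient_rotate (a b c : E2) : orient b c a = orient a b c := by
  simp only [orient_apply]
  ring

theorem orient_apply_left (a b : E2) : orient a b a = 0 := by
  simp [orient_apply]

theorem orient_apply_right (a b : E2) : orient a b b = 0 := by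
  rw [← orient_rotate, ← orient_rotate, orient_apply_left]

theorem exists_orient_eq_smul_left (hx : x ∈ openSegment ℝ a b) :
    ∃ t : ℝ, 0 < t ∧ orient a x = t • orient a b := by
  obtain ⟨s, t, -, ht, hst, rfl⟩ := hx
  obtain rfl : s = 1 - t := eq_sub_of_add_eq hst
  refine ⟨t, ht, AffineMap.ext fun p => ?_⟩
  simp only [AffineMap.coe_smul, Pi.smul_apply, orient_apply, PiLp.add_apply, PiLp.smul_apply,
    smul_eq_mul]
  ring

theorem exists_orient_eq_smul_right (hx : x ∈ openSegment ℝ a b) :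
    ∃ t : ℝ, 0 < t ∧ orient x b = t • orient a b := by
  obtain ⟨t, ht, h⟩ := exists_orient_eq_smul_left (openSegment_symm ℝ a b ▸ hx)
  exact ⟨t, ht, by rw [orient_swap b x, h, orient_swap a b, smul_neg, neg_neg]⟩

theorem ccw_openSegment_left_iff (hx : x ∈ openSegment ℝ a b) : Ccw a x p ↔ Ccw a b p := by
  obtain ⟨t, ht, h⟩ := exists_orient_eq_smul_left hx
  change 0 < orient a x p ↔ 0 < orient a b p
  rw [h, AffineMap.coe_smul, Pi.smul_apply, smul_eq_mul, mul_pos_iff_of_pos_left ht]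

theorem ccw_openSegment_right_iff (hx : x ∈ openSegment ℝ a b) : Ccw x b p ↔ Ccw a b p := by
  obtain ⟨t, ht, h⟩ := exists_orient_eq_smul_right hx
  change 0 < orient x b p ↔ 0 < orient a b p
  rw [h, AffineMap.coe_smul, Pi.smul_apply, smul_eq_mul, mul_pos_iff_of_pos_left ht]

theorem leftHalfPlane_openSegment_left (hx : x ∈ openSegment ℝ a b) :
    leftHalfPlane a x = leftHalfPlane a b := by
  obtain ⟨t, ht, h⟩ := exists_orient_eq_smul_left hx
  ext p
  change 0 ≤ orient a x p ↔ 0 ≤ orient a b p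
  rw [h, AffineMap.coe_smul, Pi.smul_apply, smul_eq_mul, mul_nonneg_iff_of_pos_left ht]

theorem leftHalfPlane_openSegment_right (hx : x ∈ openSegment ℝ a b) :
    leftHalfPlane x b = leftHalfPlane a b := by
  obtain ⟨t, ht, h⟩ := exists_orient_eq_smul_right hx
  ext p
  change 0 ≤ orient x b p ↔ 0 ≤ orient a b p
  rw [h, AffineMap.coe_smul, Pi.smul_apply, smul_eq_mul, mul_nonneg_iff_of_pos_left ht]

theorem leftHalfPlane_swap (a b : E2) : leftHalfPlane b a = orient a b ⁻¹' Iic 0 := by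
  ext p
  simp only [leftHalfPlane, orient_swap a b, mem_preimage, AffineMap.coe_neg, Pi.neg_apply,
    mem_Ici, mem_Iic, neg_nonneg]

theorem leftHalfPlane_union_swap (a b : E2) : leftHalfPlane a b ∪ leftHalfPlane b a = univ := by
  rw [leftHalfPlane_swap a b, leftHalfPlane, ← preimage_union, Ici_union_Iic, preimage_univ]

theorem convex_leftHalfPlane (a b : E2) : Convex ℝ (leftHalfPlane a b) :=
  (convex_Ici 0).affine_preimage (orient a b)

theorem Ccw.rotate (h : Ccw a b c) : Ccw b c a :=
  h.trans_eq (orient_rotate a b c).symm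

theorem Ccw.mem_leftHalfPlane (h : Ccw a b c) : c ∈ leftHalfPlane a b :=
  le_of_lt h

theorem Ccw.of_mem_openSegment (hc : Ccw a b c) (hd : Ccw a b d) (hz : z ∈ openSegment ℝ c d) :
    Ccw a b z :=
  ((convex_Ioi 0).affine_preimage (orient a b)).openSegment_subset hc hd hz

theorem Ccw.orient_surjective (h : Ccw a b c) : Function.Surjective (orient a b) :=
  affineMap_surjective_of_ne ((orient_apply_left a b).trans_ne h.ne)

theorem Ccw.disjoint_interior (h : Ccw a b c) {A B : Set E2} (hA : A ⊆ leftHalfPlane a b)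
    (hB : B ⊆ leftHalfPlane b a) : Disjoint (interior A) (interior B) :=
  disjoint_interior_of_subset_halfSpace h.orient_surjective hA (leftHalfPlane_swap a b ▸ hB)

theorem orient_smul_eq (a b c p : E2) :
    orient a b c • p = orient b c p • a + orient c a p • b + orient a b p • c := by
  ext i
  simp only [PiLp.add_apply, PiLp.smul_apply, smul_eq_mul, orient_apply]
  fin_cases i <;> simp only [Fin.zero_eta, Fin.mk_one] <;> ring

theorem orient_add_orient_add_orient (a b c p : E2) :
    orient b c p + orient c a p + orient a b p = orient a b c := by
  simp only [orient_apply]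
  ring

theorem Ccw.inter_leftHalfPlane_subset_convexHull (h : Ccw a b c) :
    leftHalfPlane a b ∩ leftHalfPlane b c ∩ leftHalfPlane c a ⊆ convexHull ℝ {a, b, c} := by
  rintro p ⟨⟨hab, hbc⟩, hca⟩
  have hpos : 0 < orient a b c := h
  let w : Fin 3 → ℝ := ![orient b c p, orient c a p, orient a b p]
  have hw : ∀ i ∈ Finset.univ, 0 ≤ w i := by
    intro i _
    fin_cases i <;> assumption
  have hsum : ∑ i, w i = orient a b c := by
    rw [Fin.sum_univ_three]
    exact orient_add_orient_add_orient a b c p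
  have hcenter : Finset.univ.centerMass w ![a, b, c] = p := by
    rw [Finset.centerMass, hsum, inv_smul_eq_iff₀ hpos.ne', Fin.sum_univ_three, orient_smul_eq]
    rfl
  rw [← hcenter]
  refine Finset.univ.centerMass_mem_convexHull hw (hsum.symm ▸ hpos) fun i _ => ?_
  fin_cases i <;> simp

end Orientation

section CcwQuad

/-- The points `a, b, c, d`, in this order, are the vertices of a strictly convex quadrilateral that
is traversed counterclockwise. -/
def CcwQuad (a b c d : E2) : Prop := Ccw a b c ∧ Ccw b c d ∧ Ccw c d a ∧ Ccw d a b

variable {a b c d : E2}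

theorem CcwQuad.rotate (h : CcwQuad a b c d) : CcwQuad b c d a :=
  ⟨h.2.1, h.2.2.1, h.2.2.2, h.1⟩

theorem CcwQuad.convexHull_subset_leftHalfPlane (h : CcwQuad a b c d) :
    convexHull ℝ {a, b, c, d} ⊆ leftHalfPlane a b := by
  refine convexHull_min ?_ (convex_leftHalfPlane a b)
  rintro p (rfl | rfl | rfl | rfl)
  · exact (orient_apply_left _ _).ge
  · exact (orient_apply_right _ _).ge
  · exact h.1.mem_leftHalfPlane
  · exact h.2.2.2.rotate.mem_leftHalfPlane

theorem CcwQuad.convexHull_eq (h : CcwQuad a b c d) :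
    convexHull ℝ {a, b, c, d} =
      leftHalfPlane a b ∩ leftHalfPlane b c ∩ leftHalfPlane c d ∩ leftHalfPlane d a := by
  refine Subset.antisymm (fun p hp => ⟨⟨⟨?_, ?_⟩, ?_⟩, ?_⟩) ?_
  · exact h.convexHull_subset_leftHalfPlane hp
  · rw [← insert_four_rotate] at hp
    exact h.rotate.convexHull_subset_leftHalfPlane hp
  · rw [← insert_four_rotate a, ← insert_four_rotate b] at hp
    exact h.rotate.rotate.convexHull_subset_leftHalfPlane hp
  · rw [insert_four_rotate d] at hp
    exact h.rotate.rotate.rotate.convexHull_subset_leftHalfPlane hp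
  · rintro p ⟨⟨⟨hab, hbc⟩, hcd⟩, hda⟩
    -- The diagonal `ac` splits the quadrilateral into two triangles.
    rcases (leftHalfPlane_union_swap c a).ge (mem_univ p) with hca | hac
    · refine convexHull_mono ?_ (h.1.inter_leftHalfPlane_subset_convexHull ⟨⟨hab, hbc⟩, hca⟩)
      grind
    · refine convexHull_mono ?_ (h.2.2.1.inter_leftHalfPlane_subset_convexHull ⟨⟨hcd, hda⟩, hac⟩)
      grind

end CcwQuad

section CrossCut

/-- The segments `xz` and `yw` cut a quadrilateral `abcd` crosswise: `x, y, z, w` are relatively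
interior points of the sides `ab, bc, cd, da`, and the segments cross at `o`. -/
structure IsCrossCut (a b c d x y z w o : E2) : Prop where
  mem_ab : x ∈ openSegment ℝ a b
  mem_bc : y ∈ openSegment ℝ b c
  mem_cd : z ∈ openSegment ℝ c d
  mem_da : w ∈ openSegment ℝ d a
  mem_xz : o ∈ openSegment ℝ x z
  mem_yw : o ∈ openSegment ℝ y w

theorem isCrossCut_midpoint (a b c d : E2) :
    IsCrossCut a b c d (midpoint ℝ a b) (midpoint ℝ b c) (midpoint ℝ c d) (midpoint ℝ d a)
      ((4 : ℝ)⁻¹ • (a + b + c + d)) where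
  mem_ab := midpoint_mem_openSegment a b
  mem_bc := midpoint_mem_openSegment b c
  mem_cd := midpoint_mem_openSegment c d
  mem_da := midpoint_mem_openSegment d a
  mem_xz := inv_four_smul_add_eq_midpoint (𝕜 := ℝ) a b c d ▸ midpoint_mem_openSegment _ _
  mem_yw := by
    rw [show a + b + c + d = b + c + d + a by abel, inv_four_smul_add_eq_midpoint]
    exact midpoint_mem_openSegment _ _

variable {a b c d x y z w o : E2}

namespace IsCrossCut

theorem rotate (h : IsCrossCut a b c d x y z w o) : IsCrossCut b c d a y z w x o :=
  ⟨h.mem_bc, h.mem_cd, h.mem_da, h.mem_ab, h.mem_yw, openSegment_symm ℝ x z ▸ h.mem_xz⟩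

theorem ccw_xza (h : IsCrossCut a b c d x y z w o) (hq : CcwQuad a b c d) : Ccw x z a := by
  have habz : Ccw a b z := hq.1.of_mem_openSegment hq.2.2.2.rotate h.mem_cd
  exact ((ccw_openSegment_left_iff h.mem_ab).2 habz).rotate

theorem ccw_xzd (h : IsCrossCut a b c d x y z w o) (hq : CcwQuad a b c d) : Ccw x z d := by
  have hcdx : Ccw c d x := hq.2.2.1.of_mem_openSegment hq.2.1.rotate h.mem_ab
  exact ((ccw_openSegment_right_iff h.mem_cd).2 hcdx).rotate.rotate

theorem ccwQuad_corner (h : IsCrossCut a b c d x y z w o) (hq : CcwQuad a b c d) :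
    CcwQuad a x o w := by
  have hxzw : Ccw x z w := (h.ccw_xzd hq).of_mem_openSegment (h.ccw_xza hq) h.mem_da
  have hywa : Ccw y w a := h.rotate.ccw_xzd hq.rotate
  have hdax : Ccw d a x := by
    have hadx : Ccw a x d := (ccw_openSegment_left_iff h.mem_ab).2 hq.2.2.2.rotate
    exact hadx.rotate.rotate
  exact ⟨((ccw_openSegment_left_iff h.mem_xz).2 (h.ccw_xza hq)).rotate.rotate,
    (ccw_openSegment_left_iff h.mem_xz).2 hxzw,
    (ccw_openSegment_right_iff h.mem_yw).2 hywa,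
    (ccw_openSegment_right_iff h.mem_da).2 hdax⟩

theorem convexHull_corner_subset (h : IsCrossCut a b c d x y z w o) :
    convexHull ℝ {a, x, o, w} ⊆ convexHull ℝ {a, b, c, d} := by
  set Q := convexHull ℝ {a, b, c, d}
  have hQ : Convex ℝ Q := convex_convexHull ℝ _
  have hvertices : {a, b, c, d} ⊆ Q := subset_convexHull ℝ _
  have ha : a ∈ Q := hvertices (by simp)
  have hb : b ∈ Q := hvertices (by simp)
  have hc : c ∈ Q := hvertices (by simp)
  have hd : d ∈ Q := hvertices (by simp)
  have hx : x ∈ Q := hQ.openSegment_subset ha hb h.mem_ab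
  have hz : z ∈ Q := hQ.openSegment_subset hc hd h.mem_cd
  have hw : w ∈ Q := hQ.openSegment_subset hd ha h.mem_da
  have ho : o ∈ Q := hQ.openSegment_subset hx hz h.mem_xz
  refine convexHull_min ?_ hQ
  rintro p (rfl | rfl | rfl | rfl) <;> assumption

theorem convexHull_corner_eq (h : IsCrossCut a b c d x y z w o) (hq : CcwQuad a b c d) :
    convexHull ℝ {a, x, o, w} =
      convexHull ℝ {a, b, c, d} ∩ (leftHalfPlane x z ∩ leftHalfPlane y w) := by
  have hcorner : convexHull ℝ {a, x, o, w} =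
      leftHalfPlane a b ∩ leftHalfPlane x z ∩ leftHalfPlane y w ∩ leftHalfPlane d a := by
    rw [(h.ccwQuad_corner hq).convexHull_eq, leftHalfPlane_openSegment_left h.mem_ab,
      leftHalfPlane_openSegment_left h.mem_xz, leftHalfPlane_openSegment_right h.mem_yw,
      leftHalfPlane_openSegment_right h.mem_da]
  refine Subset.antisymm (subset_inter h.convexHull_corner_subset ?_) ?_
  · rw [hcorner]
    exact fun p hp => ⟨hp.1.1.2, hp.1.2⟩
  · rw [hcorner, hq.convexHull_eq]
    exact fun p hp => ⟨⟨⟨hp.1.1.1.1, hp.2.1⟩, hp.2.2⟩, hp.1.2⟩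

end IsCrossCut

end CrossCut

theorem stmt9_general {a b c d x y z w o : E2} (hq : CcwQuad a b c d)
    (h : IsCrossCut a b c d x y z w o) :
    let Q := convexHull ℝ ({a, b, c, d} : Set E2)
    let Qa := convexHull ℝ ({a, x, o, w} : Set E2)
    let Qb := convexHull ℝ ({x, b, y, o} : Set E2)
    let Qc := convexHull ℝ ({o, y, c, z} : Set E2)
    let Qd := convexHull ℝ ({w, o, z, d} : Set E2)
    (Disjoint (interior Qa) (interior Qb) ∧ Disjoint (interior Qa) (interior Qc) ∧
      Disjoint (interior Qa) (interior Qd) ∧ Disjoint (interior Qb) (interior Qc) ∧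
      Disjoint (interior Qb) (interior Qd) ∧ Disjoint (interior Qc) (interior Qd)) ∧
    Qa ∪ Qb ∪ Qc ∪ Qd = Q ∧
    volume Qa + volume Qb + volume Qc + volume Qd = volume Q := by
  intro Q Qa Qb Qc Qd
  have hQa : Qa = Q ∩ (leftHalfPlane x z ∩ leftHalfPlane y w) := h.convexHull_corner_eq hq
  have hQb : Qb = Q ∩ (leftHalfPlane y w ∩ leftHalfPlane z x) := by
    simpa only [insert_four_rotate x, insert_four_rotate a] using
      h.rotate.convexHull_corner_eq hq.rotate
  have hQc : Qc = Q ∩ (leftHalfPlane z x ∩ leftHalfPlane w y) := by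
    simpa only [insert_four_rotate y, insert_four_rotate o, insert_four_rotate b,
      insert_four_rotate a] using h.rotate.rotate.convexHull_corner_eq hq.rotate.rotate
  have hQd : Qd = Q ∩ (leftHalfPlane w y ∩ leftHalfPlane x z) := by
    simpa only [← insert_four_rotate d] using
      h.rotate.rotate.rotate.convexHull_corner_eq hq.rotate.rotate.rotate
  have hxz : Ccw x z a := h.ccw_xza hq
  have hyw : Ccw y w a := h.rotate.ccw_xzd hq.rotate
  rw [hQa, hQb, hQc, hQd]
  refine ⟨⟨?_, ?_, ?_, ?_, ?_, ?_⟩, ?_, ?_⟩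
  · exact hxz.disjoint_interior (by grind) (by grind)
  · exact hxz.disjoint_interior (by grind) (by grind)
  · exact hyw.disjoint_interior (by grind) (by grind)
  · exact hyw.disjoint_interior (by grind) (by grind)
  · exact (hxz.disjoint_interior (by grind) (by grind)).symm
  · exact (hxz.disjoint_interior (by grind) (by grind)).symm
  · exact inter_quadrants_union (leftHalfPlane_union_swap x z) (leftHalfPlane_union_swap y w)
  · rw [leftHalfPlane_swap x z, leftHalfPlane_swap y w]
    exact measure_inter_quadrants volume hxz.orient_surjective hyw.orient_surjective 0 0 Q

/-- The four closed subquadrilaterals of the red refinement of a convex quadrilateral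
`Q = conv{v1, v2, v3, v4}` (vertices listed counterclockwise) have pairwise disjoint
interiors and their union is `Q`; in particular their areas (two-dimensional Lebesgue
measures) sum to the area of `Q`. -/
theorem stmt9 (v1 v2 v3 v4 m12 m23 m34 m41 c : E2)
    (hquad : ConvexQuad v1 v2 v3 v4)
    (hccw : Ccw v1 v2 v3 ∧ Ccw v2 v3 v4 ∧ Ccw v3 v4 v1 ∧ Ccw v4 v1 v2)
    (hm12 : m12 = midpoint ℝ v1 v2) (hm23 : m23 = midpoint ℝ v2 v3)
    (hm34 : m34 = midpoint ℝ v3 v4) (hm41 : m41 = midpoint ℝ v4 v1)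
    (hc : c = (4 : ℝ)⁻¹ • (v1 + v2 + v3 + v4))
    (Q1 Q2 Q3 Q4 : Set E2)
    (hQ1 : Q1 = convexHull ℝ ({v1, m12, c, m41} : Set E2))
    (hQ2 : Q2 = convexHull ℝ ({m12, v2, m23, c} : Set E2))
    (hQ3 : Q3 = convexHull ℝ ({c, m23, v3, m34} : Set E2))
    (hQ4 : Q4 = convexHull ℝ ({m41, c, m34, v4} : Set E2)) :
    (Disjoint (interior Q1) (interior Q2) ∧ Disjoint (interior Q1) (interior Q3) ∧
      Disjoint (interior Q1) (interior Q4) ∧ Disjoint (interior Q2) (interior Q3) ∧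
      Disjoint (interior Q2) (interior Q4) ∧ Disjoint (interior Q3) (interior Q4)) ∧
    Q1 ∪ Q2 ∪ Q3 ∪ Q4 = convexHull ℝ ({v1, v2, v3, v4} : Set E2) ∧
    volume Q1 + volume Q2 + volume Q3 + volume Q4 =
      volume (convexHull ℝ ({v1, v2, v3, v4} : Set E2)) := by
  subst_vars
  exact stmt9_general hccw (isCrossCut_midpoint v1 v2 v3 v4)
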